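/- arXiv:2511.14485 — 2 statements merged into one kernel-verified Lean document; each statement's English description precedes it below -/
import Mathlib

section
/- Let X be a nonempty set and let k : X × X → ℝ be a symmetric positive definite kernel. Then there exists a real Hilbert space H and a map Φ : X → H such that k(x, x') = ⟨Φ(x), Φ(x')⟩_H for all x, x' ∈ X. -/
/-!
A positive semidefinite kernel is the reproducing kernel of a Hilbert space of functions, and the
kernel sections `k(·, x)` are a feature map: the reproducing property gives
`⟪k(·, x), k(·, x')⟫ = k(x, x')`.
-/

open scoped ComplexOrder InnerProductSpace

theorem posSemidef_of_forall_fin {n R : Type*} [Ring R] [PartialOrder R] [StarRing R]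
    {M : Matrix n n R} (hM : M.IsHermitian)
    (hnonneg : ∀ (N : ℕ) (x : Fin N → n) (c : Fin N → R),
      0 ≤ ∑ i, ∑ j, star (c i) * M (x i) (x j) * c j) :
    M.PosSemidef := by
  refine ⟨hM, fun f ↦ ?_⟩
  let e : Fin f.support.card ≃ f.support := f.support.equivFin.symm
  have sum_support_eq (g : n → R) : ∑ x ∈ f.support, g x = ∑ i, g (e i) := by
    rw [e.sum_comp (fun x : f.support ↦ g x), Finset.sum_coe_sort]
  simpa only [Finsupp.sum, sum_support_eq] using
    hnonneg f.support.card (fun i ↦ e i) (fun i ↦ f (e i))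

section ScalarKernel

variable {𝕜 X : Type*} [RCLike 𝕜]

/-- A scalar kernel as an operator-valued kernel: the entry `M x y` becomes multiplication by
`M x y` on `𝕜`. This is the form of kernel from which `RKHS.OfKernel` builds a Hilbert space. -/
noncomputable def operatorKernel (M : Matrix X X 𝕜) : Matrix X X (𝕜 →L[𝕜] 𝕜) :=
  M.map (ContinuousLinearMap.toSpanSingleton 𝕜)

theorem operatorKernel_apply (M : Matrix X X 𝕜) (x y : X) (z : 𝕜) :
    operatorKernel M x y z = z * M x y := rfl

theorem isHermitian_operatorKernel {M : Matrix X X 𝕜} (hM : M.IsHermitian) :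
    (operatorKernel M).IsHermitian := by
  ext x y
  refine ext_inner_right 𝕜 fun w ↦ ?_
  rw [Matrix.conjTranspose_apply, ContinuousLinearMap.star_eq_adjoint,
    ContinuousLinearMap.adjoint_inner_left]
  simp [operatorKernel_apply, ← hM.apply x y]

theorem posSemidef_operatorKernel {M : Matrix X X 𝕜} (hM : M.PosSemidef) :
    (operatorKernel M).PosSemidef := by
  have posSemidef_iff := (RKHS.posSemidef_tfae (K := operatorKernel M)).out 0 2
  refine posSemidef_iff.mpr ⟨isHermitian_operatorKernel hM.isHermitian, fun f ↦ ?_⟩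
  have inner_eq (x y : X) (w z : 𝕜) :
      ⟪operatorKernel M y x w, z⟫_𝕜 = star w * M x y * z := by
    rw [operatorKernel_apply, RCLike.inner_apply, map_mul, ← hM.isHermitian.apply x y]
    simp only [RCLike.star_def]
    ring
  simpa only [inner_eq] using (RCLike.nonneg_iff.mp (hM.2 f)).1

/-- The canonical feature map of a positive semidefinite kernel `M`, sending `x` to the kernel
section `M(·, x)` in the reproducing kernel Hilbert space of `M`. -/
noncomputable def canonicalFeatureMap (M : Matrix X X 𝕜) [Fact (operatorKernel M).PosSemidef]
    (x : X) : RKHS.OfKernel (operatorKernel M) :=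
  RKHS.kerFun (RKHS.OfKernel (operatorKernel M)) x 1

theorem inner_canonicalFeatureMap (M : Matrix X X 𝕜) [Fact (operatorKernel M).PosSemidef]
    (x y : X) : ⟪canonicalFeatureMap M x, canonicalFeatureMap M y⟫_𝕜 = M x y := by
  rw [canonicalFeatureMap, canonicalFeatureMap, RKHS.kerFun_inner, RKHS.kerFun_apply,
    RKHS.OfKernel.kernel_ofKernel, operatorKernel_apply, RCLike.inner_apply, map_one, mul_one,
    one_mul]

end ScalarKernel

theorem kernel_feature_map_general {𝕜 : Type v} {X : Type u} [RCLike 𝕜] {k : Matrix X X 𝕜}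
    (hk : k.PosSemidef) :
    ∃ (H : Type max u v) (_ : NormedAddCommGroup H) (_ : InnerProductSpace 𝕜 H)
      (_ : CompleteSpace H) (Φ : X → H), ∀ x x', k x x' = ⟪Φ x, Φ x'⟫_𝕜 :=
  have : Fact (operatorKernel k).PosSemidef := ⟨posSemidef_operatorKernel hk⟩
  ⟨RKHS.OfKernel (operatorKernel k), inferInstance, inferInstance, inferInstance,
    canonicalFeatureMap k, fun x x' ↦ (inner_canonicalFeatureMap k x x').symm⟩

/-- Feature-space representation of a positive definite kernel: every symmetric
positive definite kernel `k` on a nonempty set `X` arises as the inner product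
of a feature map `Φ : X → H` into some real Hilbert space `H`. -/
theorem kernel_feature_map {X : Type u} [Nonempty X] (k : X → X → ℝ)
    (hsymm : ∀ x x', k x x' = k x' x)
    (hpd : ∀ (N : ℕ) (x : Fin N → X) (c : Fin N → ℝ),
      0 ≤ ∑ i, ∑ j, c i * c j * k (x i) (x j)) :
    ∃ (H : Type u) (_ : NormedAddCommGroup H) (ip : InnerProductSpace ℝ H)
      (_ : CompleteSpace H) (Φ : X → H),
      ∀ x x', k x x' = @inner ℝ H ip.toInner (Φ x) (Φ x') :=
  kernel_feature_map_general (k := Matrix.of k) <|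
    posSemidef_of_forall_fin (.ext fun x x' ↦ hsymm x' x) fun N x c ↦ by
      simpa [mul_right_comm] using hpd N x c
end

section
/- Let (X, 𝒜, μ) be a σ-finite measure space and let k : X × X → ℝ be measurable and square-integrable with respect to the product measure μ ⊗ μ. Define the integral operator T_k on L²(X, μ) by (T_k f)(x) = ∫_X k(x, x') f(x') dμ(x'). Then for any Hilbert basis (orthonormal basis) (e_i)_{i∈I} of L²(X, μ), one has Σ_{i∈I} ‖T_k e_i‖²_{L²} = ∫_{X×X} |k(x, x')|² d(μ ⊗ μ)(x, x'); in particular T_k is a Hilbert–Schmidt operator. -/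
open MeasureTheory

/-! Write `f ⊗ ḡ` for the kernel `(x, y) ↦ f x * conj (g y)`. If `T` has kernel `k`, Fubini gives
`⟪f ⊗ ḡ, k⟫ = ⟪f, T g⟫`. For Hilbert bases `d` of `L²(μ)` and `e` of `L²(ν)` the kernels
`d i ⊗ ē j` form a Hilbert basis of `L²(μ ⊗ ν)`, so Parseval's identity, once for `k` and once for
each `T (e j)`, yields `‖k‖² = ∑ i j, ‖⟪d i, T (e j)⟫‖² = ∑ j, ‖T (e j)‖²`. Passing through the
product basis avoids exchanging an integral with a sum over a possibly uncountable index set. -/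

open scoped ComplexConjugate InnerProductSpace

section HilbertBasis

variable {𝕜 E F G ι κ : Type*} [RCLike 𝕜]
  [NormedAddCommGroup E] [InnerProductSpace 𝕜 E] [NormedAddCommGroup F] [InnerProductSpace 𝕜 F]
  [NormedAddCommGroup G] [InnerProductSpace 𝕜 G]

theorem hasSum_norm_inner_sq_hilbertBasis (b : HilbertBasis ι 𝕜 E) (x : E) :
    HasSum (fun i => ‖⟪b i, x⟫_𝕜‖ ^ 2) (‖x‖ ^ 2) := by
  have h := (b.hasSum_inner_mul_inner x x).mapL (RCLike.reCLM (K := 𝕜))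
  simpa only [RCLike.reCLM_apply, inner_mul_symm_re_eq_norm, norm_mul, norm_inner_symm x, ← sq,
    inner_self_eq_norm_sq] using h

theorem inner_sesquilinear_eq_zero_of_hilbertBasis (B : E →L[𝕜] F →L⋆[𝕜] G)
    (d : HilbertBasis ι 𝕜 E) (e : HilbertBasis κ 𝕜 F) {z : G}
    (h : ∀ i j, ⟪B (d i) (e j), z⟫_𝕜 = 0) (x : E) (y : F) : ⟪B x y, z⟫_𝕜 = 0 := by
  simp only [inner_eq_zero_symm (y := z)] at h ⊢
  have hd := Submodule.dense_iff_topologicalClosure_eq_top.2 d.dense_span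
  have he := Submodule.dense_iff_topologicalClosure_eq_top.2 e.dense_span
  have hleft (i : ι) : (innerSL 𝕜 z).comp (B (d i)) = 0 :=
    ContinuousLinearMap.ext_on he (by rintro _ ⟨j, rfl⟩; exact h i j)
  have hright : (innerSL 𝕜 z).comp (B.flip y) = 0 :=
    ContinuousLinearMap.ext_on hd (by rintro _ ⟨i, rfl⟩; exact DFunLike.congr_fun (hleft i) y)
  exact DFunLike.congr_fun hright x

end HilbertBasis

section Integrability

variable {X Y : Type*} [MeasurableSpace X] [MeasurableSpace Y]

theorem exists_pos_memLp_of_sigmaFinite (μ : Measure X) [SigmaFinite μ] (p : ENNReal) :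
    ∃ w : X → ℝ, (∀ x, 0 < w x) ∧ MemLp w p μ := by
  obtain ⟨g, hg_pos, hg_meas, hg_lt⟩ := exists_pos_lintegral_lt_of_sigmaFinite μ one_ne_zero
  have hg : MemLp (fun x => (g x : ℝ)) 1 μ := by
    refine ⟨hg_meas.coe_nnreal_real.aestronglyMeasurable, ?_⟩
    simpa [eLpNorm_one_eq_lintegral_enorm] using hg_lt.trans ENNReal.one_lt_top
  refine ⟨fun x => (g x : ℝ) ^ (p⁻¹).toReal, fun x => Real.rpow_pos_of_pos (hg_pos x) _, ?_⟩
  simpa using hg.norm_rpow_div p⁻¹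

theorem ae_eq_zero_of_forall_setIntegral_prod_eq_zero {E : Type*} [NormedAddCommGroup E]
    [NormedSpace ℝ E] [CompleteSpace E] {ρ : Measure (X × Y)} {f : X × Y → E}
    (hf : Integrable f ρ)
    (h : ∀ s t, MeasurableSet s → MeasurableSet t → ∫ z in s ×ˢ t, f z ∂ρ = 0) :
    f =ᵐ[ρ] 0 := by
  have huniv : ∫ z, f z ∂ρ = 0 := by simpa using h Set.univ Set.univ .univ .univ
  have hmeas (u : Set (X × Y)) (hu : MeasurableSet u) : ∫ z in u, f z ∂ρ = 0 := by
    induction u, hu using MeasurableSpace.induction_on_inter generateFrom_prod.symm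
      isPiSystem_prod with
    | empty => simp
    | basic u hu =>
      obtain ⟨s, hs, t, ht, rfl⟩ := hu
      exact h s t hs ht
    | compl u hu ih => rw [setIntegral_compl hu hf, huniv, ih, sub_zero]
    | iUnion u hd hu ih => simp [integral_iUnion hu hd hf.integrableOn, ih]
  exact hf.ae_eq_zero_of_forall_setIntegral_eq_zero fun u hu _ => hmeas u hu

end Integrability

section RankOneKernel

variable {𝕜 X Y : Type*} [RCLike 𝕜] [MeasurableSpace X] [MeasurableSpace Y]
  {μ : Measure X} {ν : Measure Y}

theorem memLp_two_mul_conj_prod [SFinite ν] {f : X → 𝕜} {g : Y → 𝕜} (hf : MemLp f 2 μ)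
    (hg : MemLp g 2 ν) : MemLp (fun z : X × Y => f z.1 * conj (g z.2)) 2 (μ.prod ν) := by
  refine (memLp_two_iff_integrable_sq_norm (hf.1.comp_fst.mul hg.star.1.comp_snd)).2 ?_
  simpa [mul_pow] using
    (hf.integrable_norm_pow two_ne_zero).mul_prod (hg.integrable_norm_pow two_ne_zero)

theorem integrable_conj_mul_mul_prod [SFinite ν] {f : X → 𝕜} {g : Y → 𝕜} {k : X × Y → 𝕜}
    (hf : MemLp f 2 μ) (hg : MemLp g 2 ν) (hk : MemLp k 2 (μ.prod ν)) :
    Integrable (fun z => conj (f z.1) * (k z * g z.2)) (μ.prod ν) := by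
  refine ((memLp_two_mul_conj_prod hf hg).star.integrable_mul hk).congr (.of_forall fun z => ?_)
  simp only [Pi.mul_apply, Pi.star_apply, star_mul', RCLike.star_def, RCLike.conj_conj]
  ring

/-- The kernel `(x, y) ↦ f x * conj (g y)` of the rank-one operator `h ↦ ⟪g, h⟫ • f` from `L²(ν)`
to `L²(μ)`. The conjugate makes it conjugate-linear in `g`, so that its inner product with the
kernel of an operator `T` is `⟪f, T g⟫`. -/
noncomputable def rankOneKernel [SFinite ν] (f : Lp 𝕜 2 μ) (g : Lp 𝕜 2 ν) : Lp 𝕜 2 (μ.prod ν) :=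
  (memLp_two_mul_conj_prod (Lp.memLp f) (Lp.memLp g)).toLp _

theorem coeFn_rankOneKernel [SFinite ν] (f : Lp 𝕜 2 μ) (g : Lp 𝕜 2 ν) :
    rankOneKernel f g =ᵐ[μ.prod ν] fun z => f z.1 * conj (g z.2) :=
  MemLp.coeFn_toLp _

theorem inner_rankOneKernel_left [SFinite ν] (f : Lp 𝕜 2 μ) (g : Lp 𝕜 2 ν)
    (K : Lp 𝕜 2 (μ.prod ν)) :
    ⟪rankOneKernel f g, K⟫_𝕜 = ∫ z, conj (f z.1) * (K z * g z.2) ∂(μ.prod ν) := by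
  rw [L2.inner_def]
  refine integral_congr_ae ?_
  filter_upwards [coeFn_rankOneKernel f g] with z hz
  rw [hz, RCLike.inner_apply, map_mul, RCLike.conj_conj]
  ring

theorem inner_rankOneKernel_rankOneKernel [SFinite μ] [SFinite ν] (f f' : Lp 𝕜 2 μ)
    (g g' : Lp 𝕜 2 ν) :
    ⟪rankOneKernel f g, rankOneKernel f' g'⟫_𝕜 = ⟪f, f'⟫_𝕜 * ⟪g', g⟫_𝕜 := by
  rw [inner_rankOneKernel_left, L2.inner_def, L2.inner_def, ← integral_prod_mul]
  refine integral_congr_ae ?_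
  filter_upwards [coeFn_rankOneKernel f' g'] with z hz
  rw [hz, RCLike.inner_apply, RCLike.inner_apply]
  ring

theorem norm_rankOneKernel [SFinite μ] [SFinite ν] (f : Lp 𝕜 2 μ) (g : Lp 𝕜 2 ν) :
    ‖rankOneKernel f g‖ = ‖f‖ * ‖g‖ := by
  rw [← sq_eq_sq₀ (norm_nonneg _) (by positivity), mul_pow, ← RCLike.ofReal_inj (K := 𝕜)]
  push_cast
  simp only [← inner_self_eq_norm_sq_to_K, inner_rankOneKernel_rankOneKernel]

theorem rankOneKernel_add_left [SFinite ν] (f f' : Lp 𝕜 2 μ) (g : Lp 𝕜 2 ν) :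
    rankOneKernel (f + f') g = rankOneKernel f g + rankOneKernel f' g := by
  rw [rankOneKernel, rankOneKernel, rankOneKernel, ← MemLp.toLp_add, MemLp.toLp_eq_toLp_iff]
  filter_upwards [Measure.quasiMeasurePreserving_fst.ae (Lp.coeFn_add f f')] with z hz
  simp only [hz, Pi.add_apply, add_mul]

theorem rankOneKernel_add_right [SFinite ν] (f : Lp 𝕜 2 μ) (g g' : Lp 𝕜 2 ν) :
    rankOneKernel f (g + g') = rankOneKernel f g + rankOneKernel f g' := by
  rw [rankOneKernel, rankOneKernel, rankOneKernel, ← MemLp.toLp_add, MemLp.toLp_eq_toLp_iff]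
  filter_upwards [Measure.quasiMeasurePreserving_snd.ae (Lp.coeFn_add g g')] with z hz
  simp only [hz, Pi.add_apply, map_add, mul_add]

theorem rankOneKernel_smul_left [SFinite ν] (c : 𝕜) (f : Lp 𝕜 2 μ) (g : Lp 𝕜 2 ν) :
    rankOneKernel (c • f) g = c • rankOneKernel f g := by
  rw [rankOneKernel, rankOneKernel, ← MemLp.toLp_const_smul, MemLp.toLp_eq_toLp_iff]
  filter_upwards [Measure.quasiMeasurePreserving_fst.ae (Lp.coeFn_smul c f)] with z hz
  simp only [hz, Pi.smul_apply, smul_mul_assoc]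

theorem rankOneKernel_smul_right [SFinite ν] (c : 𝕜) (f : Lp 𝕜 2 μ) (g : Lp 𝕜 2 ν) :
    rankOneKernel f (c • g) = conj c • rankOneKernel f g := by
  rw [rankOneKernel, rankOneKernel, ← MemLp.toLp_const_smul, MemLp.toLp_eq_toLp_iff]
  filter_upwards [Measure.quasiMeasurePreserving_snd.ae (Lp.coeFn_smul c g)] with z hz
  simp only [hz, Pi.smul_apply, smul_eq_mul, map_mul, mul_left_comm]

/-- `rankOneKernel` as a continuous sesquilinear map. -/
noncomputable def rankOneKernelL (𝕜 : Type*) [RCLike 𝕜] (μ : Measure X) (ν : Measure Y)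
    [SFinite μ] [SFinite ν] :
    Lp 𝕜 2 μ →L[𝕜] Lp 𝕜 2 ν →L⋆[𝕜] Lp 𝕜 2 (μ.prod ν) :=
  (LinearMap.mk₂'ₛₗ (RingHom.id 𝕜) (starRingEnd 𝕜) (rankOneKernel (μ := μ) (ν := ν))
    rankOneKernel_add_left
    rankOneKernel_smul_left rankOneKernel_add_right rankOneKernel_smul_right).mkContinuous₂ 1
    fun f g => by rw [LinearMap.mk₂'ₛₗ_apply, norm_rankOneKernel, one_mul]

theorem eq_zero_of_forall_inner_rankOneKernel_eq_zero [SigmaFinite μ] [SigmaFinite ν]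
    {K : Lp 𝕜 2 (μ.prod ν)} (h : ∀ f g, ⟪rankOneKernel f g, K⟫_𝕜 = 0) : K = 0 := by
  obtain ⟨v, hv_pos, hv⟩ := exists_pos_memLp_of_sigmaFinite μ 2
  obtain ⟨w, hw_pos, hw⟩ := exists_pos_memLp_of_sigmaFinite ν 2
  replace hv : MemLp (fun x => (v x : 𝕜)) 2 μ := hv.ofReal
  replace hw : MemLp (fun y => (w y : 𝕜)) 2 ν := hw.ofReal
  -- The weights make `K` integrable and, being positive, do not change its zero set.
  have hint : Integrable (fun z => (v z.1 : 𝕜) * (K z * w z.2)) (μ.prod ν) := by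
    simpa only [RCLike.conj_ofReal] using integrable_conj_mul_mul_prod hv hw (Lp.memLp K)
  have hzero : (fun z => (v z.1 : 𝕜) * (K z * w z.2)) =ᵐ[μ.prod ν] 0 := by
    refine ae_eq_zero_of_forall_setIntegral_prod_eq_zero hint fun s t hs ht => ?_
    rw [← integral_indicator (hs.prod ht),
      ← h ((hv.indicator hs).toLp _) ((hw.indicator ht).toLp _), inner_rankOneKernel_left]
    refine integral_congr_ae ?_
    filter_upwards [Measure.quasiMeasurePreserving_fst.ae (hv.indicator hs).coeFn_toLp,
      Measure.quasiMeasurePreserving_snd.ae (hw.indicator ht).coeFn_toLp] with z hz₁ hz₂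
    rw [hz₁, hz₂]
    by_cases hzs : z.1 ∈ s <;> by_cases hzt : z.2 ∈ t <;> simp [hzs, hzt]
  rw [Lp.eq_zero_iff_ae_eq_zero]
  filter_upwards [hzero] with z hz
  simpa [(hv_pos z.1).ne', (hw_pos z.2).ne'] using hz

theorem orthonormal_rankOneKernel [SFinite μ] [SFinite ν] {ι κ : Type*} {d : ι → Lp 𝕜 2 μ}
    {e : κ → Lp 𝕜 2 ν} (hd : Orthonormal 𝕜 d) (he : Orthonormal 𝕜 e) :
    Orthonormal 𝕜 fun p : ι × κ => rankOneKernel (d p.1) (e p.2) := by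
  classical
  rw [orthonormal_iff_ite] at hd he ⊢
  intro p q
  rw [inner_rankOneKernel_rankOneKernel, hd, he]
  simp only [Prod.ext_iff, ite_and, eq_comm (a := q.2), ite_mul, one_mul, zero_mul]

/-- The Hilbert basis of `L²(μ ⊗ ν)` consisting of the rank-one kernels built from Hilbert bases of
`L²(μ)` and `L²(ν)`. -/
noncomputable def rankOneKernelBasis [SigmaFinite μ] [SigmaFinite ν] {ι κ : Type*}
    (d : HilbertBasis ι 𝕜 (Lp 𝕜 2 μ)) (e : HilbertBasis κ 𝕜 (Lp 𝕜 2 ν)) :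
    HilbertBasis (ι × κ) 𝕜 (Lp 𝕜 2 (μ.prod ν)) :=
  .mkOfOrthogonalEqBot (orthonormal_rankOneKernel d.orthonormal e.orthonormal) <| by
    refine (Submodule.eq_bot_iff _).2 fun K hK => ?_
    refine eq_zero_of_forall_inner_rankOneKernel_eq_zero <|
      inner_sesquilinear_eq_zero_of_hilbertBasis (rankOneKernelL 𝕜 μ ν) d e fun i j => ?_
    exact hK _ (Submodule.subset_span (Set.mem_range_self (i, j)))

theorem rankOneKernelBasis_apply [SigmaFinite μ] [SigmaFinite ν] {ι κ : Type*}
    (d : HilbertBasis ι 𝕜 (Lp 𝕜 2 μ)) (e : HilbertBasis κ 𝕜 (Lp 𝕜 2 ν)) (p : ι × κ) :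
    rankOneKernelBasis d e p = rankOneKernel (d p.1) (e p.2) := by
  rw [rankOneKernelBasis, HilbertBasis.coe_mkOfOrthogonalEqBot]

end RankOneKernel

section IntegralOperator

variable {𝕜 X Y : Type*} [RCLike 𝕜] [MeasurableSpace X] [MeasurableSpace Y]
  {μ : Measure X} {ν : Measure Y} {k : X × Y → 𝕜}

theorem norm_toLp_two_sq {E : Type*} [NormedAddCommGroup E] {f : X → E} (hf : MemLp f 2 μ) :
    ‖hf.toLp f‖ ^ 2 = ∫ x, ‖f x‖ ^ 2 ∂μ := by
  have hnonneg : 0 ≤ ∫ x, ‖f x‖ ^ 2 ∂μ := integral_nonneg fun x => by positivity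
  rw [Lp.norm_toLp, hf.eLpNorm_eq_integral_rpow_norm two_ne_zero ENNReal.ofNat_ne_top]
  simp only [ENNReal.toReal_ofNat, Real.rpow_two, ← one_div, ← Real.sqrt_eq_rpow]
  rw [ENNReal.toReal_ofReal (Real.sqrt_nonneg _), Real.sq_sqrt hnonneg]

theorem inner_rankOneKernel_toLp [SFinite μ] [SFinite ν] (hk : MemLp k 2 (μ.prod ν))
    (f : Lp 𝕜 2 μ) {g : Lp 𝕜 2 ν} {h : Lp 𝕜 2 μ}
    (hh : h =ᵐ[μ] fun x => ∫ y, k (x, y) * g y ∂ν) :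
    ⟪rankOneKernel f g, hk.toLp k⟫_𝕜 = ⟪f, h⟫_𝕜 := by
  have hint := integrable_conj_mul_mul_prod (Lp.memLp f) (Lp.memLp g) hk
  calc ⟪rankOneKernel f g, hk.toLp k⟫_𝕜
      = ∫ z, conj (f z.1) * (k z * g z.2) ∂(μ.prod ν) := by
        rw [inner_rankOneKernel_left]
        refine integral_congr_ae ?_
        filter_upwards [hk.coeFn_toLp] with z hz
        rw [hz]
    _ = ∫ x, conj (f x) * ∫ y, k (x, y) * g y ∂ν ∂μ := by
        simp only [integral_prod _ hint, integral_const_mul]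
    _ = ⟪f, h⟫_𝕜 := by
        rw [L2.inner_def]
        refine integral_congr_ae ?_
        filter_upwards [hh] with x hx
        rw [hx, RCLike.inner_apply, mul_comm]

theorem integral_operator_hilbert_schmidt_general [SigmaFinite μ] [SigmaFinite ν]
    (hk : MemLp k 2 (μ.prod ν)) (T : Lp 𝕜 2 ν → Lp 𝕜 2 μ)
    (hT : ∀ f, T f =ᵐ[μ] fun x => ∫ y, k (x, y) * f y ∂ν)
    {ι : Type*} (e : HilbertBasis ι 𝕜 (Lp 𝕜 2 ν)) :
    HasSum (fun i => ‖T (e i)‖ ^ 2) (∫ z, ‖k z‖ ^ 2 ∂(μ.prod ν)) := by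
  obtain ⟨_, d, -⟩ := exists_hilbertBasis 𝕜 (Lp 𝕜 2 μ)
  have hsum : HasSum (fun p : _ × ι => ‖⟪d p.1, T (e p.2)⟫_𝕜‖ ^ 2) (‖hk.toLp k‖ ^ 2) := by
    simpa only [rankOneKernelBasis_apply, inner_rankOneKernel_toLp hk _ (hT _)] using
      hasSum_norm_inner_sq_hilbertBasis (rankOneKernelBasis d e) (hk.toLp k)
  rw [← norm_toLp_two_sq hk]
  exact ((Equiv.prodComm _ _).hasSum_iff.2 hsum).prod_fiberwise fun i =>
    hasSum_norm_inner_sq_hilbertBasis d (T (e i))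

end IntegralOperator

/-- An integral operator `T_k` with square-integrable kernel `k` on a σ-finite
measure space is Hilbert–Schmidt: for any Hilbert (orthonormal) basis `(e_i)`
of `L²(X, μ)`, the family `‖T_k e_i‖²` is summable and its sum equals
`∫ |k|² d(μ ⊗ μ)`. -/
theorem integral_operator_hilbert_schmidt {X : Type*} [MeasurableSpace X]
    (μ : Measure X) [SigmaFinite μ] (k : X × X → ℝ) (hk_meas : Measurable k)
    (hk_sq : Integrable (fun z => |k z| ^ 2) (μ.prod μ))
    (T : Lp ℝ 2 μ → Lp ℝ 2 μ)
    (hT : ∀ f : Lp ℝ 2 μ, (T f : X → ℝ) =ᵐ[μ] fun x => ∫ x', k (x, x') * f x' ∂μ)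
    {ι : Type*} (e : HilbertBasis ι ℝ (Lp ℝ 2 μ)) :
    Summable (fun i => ‖T (e i)‖ ^ 2) ∧
      ∑' i, ‖T (e i)‖ ^ 2 = ∫ z, |k z| ^ 2 ∂(μ.prod μ) := by
  have hk := (memLp_two_iff_integrable_sq_norm hk_meas.aestronglyMeasurable).2 hk_sq
  have h := integral_operator_hilbert_schmidt_general hk T hT e
  exact ⟨h.summable, h.tsum_eq⟩
end
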